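/- Let f ∈ K⦃x⦄ and suppose that for some j ≥ 0 the derivative f^{(j)} lies in O_K⦃x⦄ and is (Weierstrass) regular of degree m − j > 0. If the characteristic of K is zero, then there exists a constant c_{m,K}, depending only on m, q_K, and the ramification degree ord(p_K), such that for all nonzero y ∈ K one has |∫_{O_K} ψ(y·f(t)) |dt|| ≤ c_{m,K} · |y|^{-1/m}. -/

import Mathlib

open MeasureTheory Filter
open scoped NNReal ENNReal Classical

namespace VdC

variable {K : Type*} [NontriviallyNormedField K]

/-! ### One-variable convergent power series over a non-archimedean local field -/

/-- Evaluation of a one-variable power series (given by its coefficients) at a point. -/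
noncomputable def pseval (a : ℕ → K) (x : K) : K := ∑' i, a i * x ^ i

/-- Membership in `K⦃x⦄`: the coefficients tend to `0`, i.e. convergence on `O_K`. -/
def IsConvergent (a : ℕ → K) : Prop := Tendsto (fun i => ‖a i‖) atTop (nhds 0)

/-- Gauss norm of a power series. -/
noncomputable def gaussNorm (a : ℕ → K) : ℝ := ⨆ i, ‖a i‖

/-- Coefficients of `f - f(0)`. -/
def tail (a : ℕ → K) : ℕ → K := fun i => if i = 0 then 0 else a i

/-- SP power series: `a 1 ≠ 0` and `a j ∈ a 1 • M_K` for all `j > 1`;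
`‖a 1‖` is then the SP-norm `|f|_SP`. -/
def IsSP (a : ℕ → K) : Prop := a 1 ≠ 0 ∧ ∀ j, 1 < j → ‖a j‖ < ‖a 1‖

/-- Coefficients of `f_{b,c}(t) = (1/c) ⬝ f (b + c t)`. -/
noncomputable def shiftCoeff (a : ℕ → K) (b c : K) : ℕ → K :=
  fun j => c⁻¹ * c ^ j * ∑' m : ℕ, ((m + j).choose j : K) * a (m + j) * b ^ m

/-- `SPAt q a r` says: for all nonzero `c ∈ M_K ^ r` and all `b ∈ O_K`, the power series
`f_{b,c}` is SP.  (Here `c ∈ M_K ^ r` iff `‖c‖ ≤ q⁻¹ ^ r`.)  The SP-number of `f` is the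
least `r` with this property, i.e. `IsLeast {r | SPAt q a r} r`. -/
def SPAt (q : ℕ) (a : ℕ → K) (r : ℕ) : Prop :=
  ∀ b c : K, ‖b‖ ≤ 1 → c ≠ 0 → ‖c‖ ≤ (q : ℝ)⁻¹ ^ r → IsSP (shiftCoeff a b c)

/-- Coefficients of the derivative of a power series; `dcoeff^[k] a` gives `f^{(k)}`. -/
def dcoeff (a : ℕ → K) : ℕ → K := fun j => ((j + 1 : ℕ) : K) * a (j + 1)

/-- `K` is a non-archimedean local field whose residue field has `q` elements, the norm
being normalized so that a uniformizer `π_K` has norm `q⁻¹`. -/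
structure IsLocalField (K : Type*) [NontriviallyNormedField K] (q : ℕ) : Prop where
  nonarch : IsNonarchimedean (norm : K → ℝ)
  one_lt : 1 < q
  complete : CompleteSpace K
  exists_unif : ∃ π : K, ‖π‖ = (q : ℝ)⁻¹
  discrete : ∀ x : K, x ≠ 0 → ∃ m : ℤ, ‖x‖ = (q : ℝ) ^ m
  residue : ∃ T : Finset K, T.card = q ∧ (∀ t ∈ T, ‖t‖ ≤ 1) ∧
      ∀ x : K, ‖x‖ ≤ 1 → ∃! t, t ∈ T ∧ ‖x - t‖ < 1

/-- `ψ` is an additive character on `K`, trivial on `M_K` and nontrivial on `O_K`. -/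
structure IsAddChar (ψ : K → ℂ) : Prop where
  cont : Continuous ψ
  map_add : ∀ x y, ψ (x + y) = ψ x * ψ y
  norm_eq : ∀ x, ‖ψ x‖ = 1
  triv : ∀ x : K, ‖x‖ < 1 → ψ x = 1
  nontriv : ∃ x : K, ‖x‖ ≤ 1 ∧ ψ x ≠ 1

/-- The characteristic of `K` is zero or larger than `k`. -/
def CharCond (K : Type*) [NontriviallyNormedField K] (k : ℕ) : Prop :=
  ∀ m : ℕ, m ≤ k → (m : K) = 0 → m = 0

/-- `p` is the residue characteristic of `K` (so `q = p ^ f` is the residue cardinality)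
and `e = ord (p_K)` is the ramification degree of `K`, i.e. `‖p‖ = q ^ (-e)`. -/
def IsResidueData (K : Type*) [NontriviallyNormedField K] (q p e : ℕ) : Prop :=
  p.Prime ∧ (∃ f : ℕ, 0 < f ∧ q = p ^ f) ∧ 0 < e ∧ ‖(p : K)‖ = (q : ℝ)⁻¹ ^ e

/-- `f` is (Weierstrass) regular of degree `d`: it lies in `O_K⦃x⦄` and is congruent to
a monic polynomial of degree `d` modulo `π_K ⬝ O_K⦃x⦄`. -/
def IsRegularOfDeg (a : ℕ → K) (d : ℕ) : Prop :=
  (∀ i, ‖a i‖ ≤ 1) ∧ ‖a d - 1‖ < 1 ∧ ∀ i, d < i → ‖a i‖ < 1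

/-! ### Several variables -/

/-- Evaluation of a power series in `n` variables at a point. -/
noncomputable def mpseval {n : ℕ} (a : (Fin n → ℕ) → K) (x : Fin n → K) : K :=
  ∑' i : Fin n → ℕ, a i * ∏ j, x j ^ i j

/-- Membership in `K⦃x_1,…,x_n⦄`: `‖a i‖ → 0` as `|i| → ∞`. -/
def MIsConvergent {n : ℕ} (a : (Fin n → ℕ) → K) : Prop :=
  Tendsto (fun i => ‖a i‖) cofinite (nhds 0)

/-- Gauss norm of a multivariate power series. -/
noncomputable def mgauss {n : ℕ} (a : (Fin n → ℕ) → K) : ℝ := ⨆ i, ‖a i‖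

/-- Coefficients of `f - f(0)`. -/
def mtail {n : ℕ} (a : (Fin n → ℕ) → K) : (Fin n → ℕ) → K :=
  fun i => if i = 0 then 0 else a i

/-- Coefficients of the partial derivative `∂^α f` of a multivariate power series `f`. -/
noncomputable def mpderiv {n : ℕ} (a : (Fin n → ℕ) → K) (α : Fin n → ℕ) :
    (Fin n → ℕ) → K :=
  fun i => ((∏ j, (i j + α j).descFactorial (α j) : ℕ) : K) * a (fun j => i j + α j)

/-- The unit polydisc `O_K ^ n`. -/
def polydisc (K : Type*) [NontriviallyNormedField K] (n : ℕ) : Set (Fin n → K) :=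
  {x | ∀ i, ‖x i‖ ≤ 1}

/-! ### `K`-analytic manifolds with isometric charts, type conditions, induced measures -/

/-- An isometric analytic chart of the `d`-dimensional manifold `M ⊆ K^n` centered at
`x0 ∈ M`: `ι` selects the `d` coordinates of the coordinate projection `p : x ↦ x ∘ ι`,
and the inverse of `p` is given by the `n` convergent power series `F i`, parametrizing
`M ∩ {x : ‖x - x0‖ ≤ ‖c‖}` isometrically by the polydisc `x0 + (c O_K)^d`. -/
def IsChartAt {n : ℕ} (d : ℕ) (M : Set (Fin n → K)) (x0 : Fin n → K)
    (ι : Fin d → Fin n) (c : K) (F : Fin n → (Fin d → ℕ) → K) : Prop :=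
  Function.Injective ι ∧ c ≠ 0 ∧ (∀ i, MIsConvergent (F i)) ∧
  (∀ i, mpseval (F i) 0 = x0 i) ∧
  (∀ z : Fin d → K, z ∈ polydisc K d → ∀ j, mpseval (F (ι j)) z = x0 (ι j) + c * z j) ∧
  (∀ z z' : Fin d → K, z ∈ polydisc K d → z' ∈ polydisc K d →
      ∀ i, ‖mpseval (F i) z - mpseval (F i) z'‖ ≤ ‖c‖ * (⨆ j, ‖z j - z' j‖)) ∧
  ((fun z : Fin d → K => fun i => mpseval (F i) z) '' polydisc K d
      = M ∩ {x | ∀ i, ‖x i - x0 i‖ ≤ ‖c‖})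

/-- `M ⊆ K^n` is a `d`-dimensional `K`-analytic manifold (with isometric charts). -/
def IsManifold {n : ℕ} (d : ℕ) (M : Set (Fin n → K)) : Prop :=
  ∀ x0 ∈ M, ∃ ι c F, IsChartAt d M x0 ι c F

/-- `M` is of type at most `k` at the point `x0`: for some analytic chart `f = (F i)_i`
centered at `x0` and each nonzero `v ∈ K^n` there is a multi-index `α` with
`0 < |α| ≤ k` and `v ⬝ (∂^α f)(x0) ≠ 0`. -/
def TypeAtMost {n : ℕ} (d : ℕ) (M : Set (Fin n → K)) (x0 : Fin n → K) (k : ℕ) : Prop :=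
  ∃ ι c F, IsChartAt d M x0 ι c F ∧
    ∀ v : Fin n → K, v ≠ 0 → ∃ α : Fin d → ℕ, 0 < (∑ j, α j) ∧ (∑ j, α j) ≤ k ∧
      (∑ i, v i * mpseval (mpderiv (F i) α) 0) ≠ 0

/-- `M` is of type `k`: of type at most `k` at each of its points, `k` least such. -/
def IsOfType {n : ℕ} (d : ℕ) (M : Set (Fin n → K)) (k : ℕ) : Prop :=
  0 < k ∧ (∀ x ∈ M, TypeAtMost d M x k) ∧
    ∀ k', (∀ x ∈ M, TypeAtMost d M x k') → k ≤ k'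

/-- `μS` is the measure on the manifold `S ⊆ K^n` induced, via the isometric charts
of `S` (namely the coordinate projections `x ↦ x ∘ ι`), from the Haar measure `lamd` on
`K^d` normalized so that `O_K^d` has measure `1`. -/
def IsInducedMeasure [MeasurableSpace K] {n : ℕ} (d : ℕ) (S : Set (Fin n → K))
    (μS : Measure (Fin n → K)) (lamd : Measure (Fin d → K)) : Prop :=
  μS {x | x ∉ S} = 0 ∧
  ∀ x0 ∈ S, ∀ ι c F, IsChartAt d S x0 ι c F →
    ∀ A : Set (Fin n → K), MeasurableSet A → A ⊆ S ∩ {x | ∀ i, ‖x i - x0 i‖ ≤ ‖c‖} →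
      μS A = lamd ((fun x : Fin n → K => x ∘ ι) '' A)

/-! ### Maximal function and Riesz kernel on `K^n` -/

/-- The Hardy–Littlewood maximal function on `K^n`, where the balls are the sets
`a + b ⬝ O_K^n` with `b ≠ 0`. -/
noncomputable def maximalFn [MeasurableSpace K] {n : ℕ} (μ : Measure (Fin n → K))
    (f : (Fin n → K) → ℂ) (x : Fin n → K) : ℝ :=
  sSup {r : ℝ | ∃ (a : Fin n → K) (b : K), b ≠ 0 ∧ (∀ i, ‖x i - a i‖ ≤ ‖b‖) ∧
    r = (μ {y | ∀ i, ‖y i - a i‖ ≤ ‖b‖}).toReal⁻¹ *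
      ∫ y in {y : Fin n → K | ∀ i, ‖y i - a i‖ ≤ ‖b‖}, ‖f y‖ ∂μ}

/-- The kernel `y ↦ |y|^{-γ}` on `K^n`, extended by `0` at `0`. -/
noncomputable def rieszKernel {n : ℕ} (γ : ℝ) (y : Fin n → K) : ℂ :=
  if y = 0 then 0 else ((‖y‖ ^ (-γ) : ℝ) : ℂ)

end VdC

namespace VdCProof
open Polynomial

section Alg
variable {K : Type*} [NontriviallyNormedField K] [IsUltrametricDist K]

lemma sum_lt {ι : Type*} (s : Finset ι) (f : ι → K) {C : ℝ} (hC : 0 < C)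
    (h : ∀ i ∈ s, ‖f i‖ < C) : ‖∑ i ∈ s, f i‖ < C := by
  rcases s.eq_empty_or_nonempty with rfl | hs
  · simpa using hC
  · obtain ⟨i, hi, hle⟩ := IsUltrametricDist.exists_norm_finsetSum_le_of_nonempty hs f
    exact lt_of_le_of_lt hle (h i hi)

lemma add_lt {x y : K} {C : ℝ} (hx : ‖x‖ < C) (hy : ‖y‖ < C) : ‖x + y‖ < C :=
  lt_of_le_of_lt (IsUltrametricDist.norm_add_le_max x y) (max_lt hx hy)

lemma sub_lt {x y : K} {C : ℝ} (hx : ‖x‖ < C) (hy : ‖y‖ < C) : ‖x - y‖ < C := by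
  rw [sub_eq_add_neg]; exact add_lt hx (by rwa [norm_neg])

lemma add_le {x y : K} {C : ℝ} (hx : ‖x‖ ≤ C) (hy : ‖y‖ ≤ C) : ‖x + y‖ ≤ C :=
  le_trans (IsUltrametricDist.norm_add_le_max x y) (max_le hx hy)

lemma norm_add_of_lt {x y : K} (h : ‖y‖ < ‖x‖) : ‖x + y‖ = ‖x‖ := by
  rw [IsUltrametricDist.norm_add_eq_max_of_norm_ne_norm h.ne', max_eq_left h.le]

/-- coefficients of the Taylor expansion as a finite sum -/
lemma taylor_coeff_sum (G : K[X]) (u : K) (i : ℕ) :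
    (taylor u G).coeff i =
      ∑ k ∈ Finset.range (G.natDegree + 1), (((k + i).choose i : ℕ) : K) * G.coeff (k + i) * u ^ k := by
  rw [taylor_coeff, eval_eq_sum_range' (n := G.natDegree + 1)]
  · simp [hasseDeriv_coeff]
  · exact lt_of_le_of_lt (natDegree_hasseDeriv_le _ _) (by omega)

lemma term_le (n : ℕ) (x u : K) (k : ℕ) (hu : ‖u‖ ≤ 1) : ‖(n : K) * x * u ^ k‖ ≤ ‖x‖ := by
  rw [norm_mul, norm_mul, norm_pow]
  have h1 := IsUltrametricDist.norm_natCast_le_one K n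
  have h2 : ‖u‖ ^ k ≤ 1 := pow_le_one₀ (norm_nonneg _) hu
  calc ‖(n : K)‖ * ‖x‖ * ‖u‖ ^ k ≤ 1 * ‖x‖ * 1 := by gcongr
    _ = ‖x‖ := by ring

lemma taylor_coeff_le (G : K[X]) (u : K) (hu : ‖u‖ ≤ 1) (i : ℕ) (C : ℝ) (hC : 0 ≤ C)
    (h : ∀ k, i ≤ k → ‖G.coeff k‖ ≤ C) : ‖(taylor u G).coeff i‖ ≤ C := by
  rw [taylor_coeff_sum]
  refine IsUltrametricDist.norm_sum_le_of_forall_le_of_nonneg hC fun k _ => ?_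
  exact (term_le _ _ _ _ hu).trans (h _ (by omega))

lemma taylor_coeff_lt (G : K[X]) (u : K) (hu : ‖u‖ ≤ 1) (i : ℕ) (C : ℝ) (hC : 0 < C)
    (h : ∀ k, i ≤ k → ‖G.coeff k‖ < C) : ‖(taylor u G).coeff i‖ < C := by
  rw [taylor_coeff_sum]
  refine sum_lt _ _ hC fun k _ => ?_
  exact (term_le _ _ _ _ hu).trans_lt (h _ (by omega))

/-- Weierstrass degree -/
def Wdeg (G : K[X]) (d : ℕ) : Prop :=
  G.coeff d ≠ 0 ∧ (∀ i, ‖G.coeff i‖ ≤ ‖G.coeff d‖) ∧ ∀ i, d < i → ‖G.coeff i‖ < ‖G.coeff d‖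

lemma taylor_coeff_top (G : K[X]) (d : ℕ) (h0 : G.coeff d ≠ 0)
    (h : ∀ i, d < i → ‖G.coeff i‖ < ‖G.coeff d‖) (u : K)
    (hu : ‖u‖ ≤ 1) : ‖(taylor u G).coeff d‖ = ‖G.coeff d‖ := by
  rw [taylor_coeff_sum, Finset.sum_range_succ']
  rw [add_comm]
  have hlt : ‖∑ k ∈ Finset.range G.natDegree,
      (((k + 1 + d).choose d : ℕ) : K) * G.coeff (k + 1 + d) * u ^ (k + 1)‖ < ‖G.coeff d‖ :=
    sum_lt _ _ (norm_pos_iff.2 h0) fun k _ =>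
      (term_le _ _ _ _ hu).trans_lt (h _ (by omega))
  have h1 : ((((0 + d).choose d : ℕ) : K) * G.coeff (0 + d) * u ^ 0) = G.coeff d := by simp
  rw [h1]
  exact norm_add_of_lt hlt

lemma Wdeg.taylor {G : K[X]} {d : ℕ} (h : Wdeg G d) {u : K} (hu : ‖u‖ ≤ 1) :
    Wdeg (taylor u G) d ∧ ‖(Polynomial.taylor u G).coeff d‖ = ‖G.coeff d‖ := by
  obtain ⟨h0, h1, h2⟩ := h
  have ht := taylor_coeff_top G d h0 h2 u hu
  have hp := norm_pos_iff.2 h0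
  refine ⟨⟨?_, ?_, ?_⟩, ht⟩
  · rw [← norm_pos_iff, ht]; exact hp
  · intro i; rw [ht]
    exact taylor_coeff_le G u hu i _ hp.le fun k _ => h1 k
  · intro i hi; rw [ht]
    exact taylor_coeff_lt G u hu i _ hp fun k hk => h2 k (by omega)

/-- existence of the Weierstrass degree -/
lemma exists_Wdeg (G : K[X]) (M : ℕ) (h0 : G.coeff M ≠ 0)
    (h : ∀ i, M < i → ‖G.coeff i‖ < ‖G.coeff M‖) : ∃ d ≤ M, Wdeg G d := by
  classical
  obtain ⟨i0, hi0, hmax⟩ := Finset.exists_max_image (Finset.range (M + 1)) (fun i => ‖G.coeff i‖)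
    ⟨M, by simp⟩
  simp only [Finset.mem_range] at hi0 hmax
  have hge : ∀ i, ‖G.coeff i‖ ≤ ‖G.coeff i0‖ := by
    intro i
    by_cases hi : i < M + 1
    · exact hmax i hi
    · exact (h i (by omega)).le.trans (hmax M (by omega))
  let s := (Finset.range (M + 1)).filter (fun i => ‖G.coeff i‖ = ‖G.coeff i0‖)
  have hs : s.Nonempty := ⟨i0, by simp [s, hi0]⟩
  have hd := Finset.max'_mem s hs
  set d := s.max' hs with hdd
  simp only [s, Finset.mem_filter, Finset.mem_range] at hd
  have hpos : 0 < ‖G.coeff i0‖ := (norm_pos_iff.2 h0).trans_le (hge M)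
  refine ⟨d, by omega, ?_, ?_, ?_⟩
  · rw [← norm_pos_iff, hd.2]; exact hpos
  · intro i; rw [hd.2]; exact hge i
  · intro i hi
    rw [hd.2]
    by_cases hiM : i < M + 1
    · refine lt_of_le_of_ne (hge i) fun heq => ?_
      have : i ≤ d := Finset.le_max' s i (by simp [s, hiM, heq])
      omega
    · exact (h i (by omega)).trans_le (hge M)

/-- scaling -/
lemma Wdeg.scale {G : K[X]} {d : ℕ} (h : Wdeg G d) {c : K} (hc0 : c ≠ 0) (hc : ‖c‖ ≤ 1) :
    ∃ d' ≤ d, Wdeg (G.comp (C c * X)) d' := by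
  obtain ⟨h0, h1, h2⟩ := h
  apply exists_Wdeg
  · rw [comp_C_mul_X_coeff]
    exact mul_ne_zero h0 (pow_ne_zero _ hc0)
  · intro i hi
    rw [comp_C_mul_X_coeff, comp_C_mul_X_coeff, norm_mul, norm_mul, norm_pow, norm_pow]
    have hcp := norm_pos_iff.2 hc0
    have := h2 i hi
    have h3 : ‖c‖ ^ i ≤ ‖c‖ ^ d := pow_le_pow_of_le_one hcp.le hc hi.le
    calc ‖G.coeff i‖ * ‖c‖ ^ i ≤ ‖G.coeff i‖ * ‖c‖ ^ d := by gcongr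
      _ < _ := by gcongr

/-- if a child keeps the full degree, any other child has degree zero -/
lemma other_child {G : K[X]} {d : ℕ} (h : Wdeg G d) (hd : 0 < d) {c t t' : K}
    (hc0 : c ≠ 0) (hc : ‖c‖ < 1) (ht : ‖t‖ ≤ 1) (ht' : ‖t'‖ ≤ 1) (htt : ‖t' - t‖ = 1)
    (hW : Wdeg ((taylor t G).comp (C c * X)) d) :
    Wdeg ((taylor t' G).comp (C c * X)) 0 := by
  have hcp := norm_pos_iff.2 hc0
  obtain ⟨⟨g0, g1, g2⟩, hg⟩ := h.taylor ht
  have hlow : ∀ i, i < d → ‖(taylor t G).coeff i‖ < ‖(taylor t G).coeff d‖ := by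
    intro i hi
    have := hW.2.1 i
    rw [comp_C_mul_X_coeff, comp_C_mul_X_coeff, norm_mul, norm_mul, norm_pow, norm_pow] at this
    have h3 : ‖c‖ ^ d < ‖c‖ ^ i := pow_lt_pow_right_of_lt_one₀ hcp hc hi
    have hp := norm_pos_iff.2 g0
    by_contra hcon
    push Not at hcon
    have : ‖(taylor t G).coeff d‖ * ‖c‖ ^ d < ‖(taylor t G).coeff i‖ * ‖c‖ ^ i := by
      calc _ < ‖(taylor t G).coeff d‖ * ‖c‖ ^ i := by gcongr
        _ ≤ _ := by gcongr
    linarith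
  obtain ⟨⟨k0, k1, k2⟩, hk⟩ := h.taylor ht'
  have h0 : ‖(taylor t' G).coeff 0‖ = ‖G.coeff d‖ := by
    have e1 : (taylor t' G).coeff 0 = (taylor t G).eval (t' - t) := by
      rw [taylor_coeff_zero, taylor_eval]; congr 1; ring
    rw [e1, eval_eq_sum_range]
    have hdm : d ∈ Finset.range ((taylor t G).natDegree + 1) := by
      rw [Finset.mem_range]
      have := le_natDegree_of_ne_zero g0
      omega
    rw [← Finset.add_sum_erase _ _ hdm]
    have hn : ‖(taylor t G).coeff d * (t' - t) ^ d‖ = ‖G.coeff d‖ := by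
      rw [norm_mul, norm_pow, htt, one_pow, mul_one, hg]
    rw [norm_add_of_lt, hn]
    rw [hn, ← hg]
    refine sum_lt _ _ (norm_pos_iff.2 g0) fun i hi => ?_
    rw [norm_mul, norm_pow, htt, one_pow, mul_one]
    rcases lt_or_gt_of_ne (Finset.ne_of_mem_erase hi) with hlt | hgt
    · exact hlow i hlt
    · exact g2 i hgt
  have hcoef : ((taylor t' G).comp (C c * X)).coeff 0 = (taylor t' G).coeff 0 := by
    rw [comp_C_mul_X_coeff, pow_zero, mul_one]
  have hpos : 0 < ‖G.coeff d‖ := norm_pos_iff.2 h.1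
  have hlt : ∀ i, 0 < i → ‖((taylor t' G).comp (C c * X)).coeff i‖ < ‖G.coeff d‖ := by
    intro i hi
    rw [comp_C_mul_X_coeff, norm_mul, norm_pow]
    have h4 := k1 i
    rw [hk] at h4
    have h5 : ‖c‖ ^ i < 1 := pow_lt_one₀ hcp.le hc hi.ne'
    calc _ ≤ ‖G.coeff d‖ * ‖c‖ ^ i := by gcongr
      _ < ‖G.coeff d‖ * 1 := by gcongr
      _ = _ := mul_one _
  refine ⟨?_, ?_, ?_⟩
  · rw [hcoef, ← norm_pos_iff, h0]; exact hpos
  · intro i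
    rw [hcoef, h0]
    rcases Nat.eq_zero_or_pos i with rfl | hi
    · rw [hcoef, h0]
    · exact (hlt i hi).le
  · intro i hi
    rw [hcoef, h0]
    exact hlt i hi

/-- the polynomial `H (b + c X)` -/
noncomputable def sh (H : K[X]) (b c : K) : K[X] := (taylor b H).comp (C c * X)

lemma sh_coeff (H : K[X]) (b c : K) (i : ℕ) :
    (sh H b c).coeff i = (taylor b H).coeff i * c ^ i := comp_C_mul_X_coeff

lemma taylor_sh (H : K[X]) (b c u : K) : taylor u (sh H b c) = sh H (b + c * u) c := by
  simp only [sh, taylor_apply, comp_assoc]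
  congr 1
  simp only [add_comp, X_comp, mul_comp, C_comp, C_add, C_mul]
  ring

lemma sh_sh (H : K[X]) (b c d : K) : (sh H b c).comp (C d * X) = sh H b (c * d) := by
  simp only [sh, comp_assoc]
  congr 1
  simp only [X_comp, mul_comp, C_comp, C_mul]
  ring

end Alg

section Avg
variable {K : Type*} [NontriviallyNormedField K] [IsUltrametricDist K]

/-- residue representatives and a uniformizer -/
structure Res (q : ℕ) (π : K) (T : Finset K) : Prop where
  one_lt : 1 < q
  card : T.card = q
  le_one : ∀ t ∈ T, ‖t‖ ≤ 1
  ex : ∀ x : K, ‖x‖ ≤ 1 → ∃! t, t ∈ T ∧ ‖x - t‖ < 1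
  unif : ‖π‖ = (q : ℝ)⁻¹
  disc : ∀ x : K, x ≠ 0 → ∃ m : ℤ, ‖x‖ = (q : ℝ) ^ m

/-- average of `F` over the ball `b + π ^ k O` at resolution `n` -/
noncomputable def avg (q : ℕ) (π : K) (T : Finset K) (F : K → ℂ) : ℕ → K → ℕ → ℂ
  | 0, b, _ => F b
  | n + 1, b, k => (q : ℂ)⁻¹ * ∑ t ∈ T, avg q π T F n (b + π ^ k * t) (k + 1)

variable {q : ℕ} {π : K} {T : Finset K}

lemma Res.q_pos (h : Res q π T) : (0 : ℝ) < q := by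
  have := h.one_lt
  exact_mod_cast (by omega : 0 < q)

lemma Res.q_one (h : Res q π T) : (1 : ℝ) < q := by exact_mod_cast h.one_lt

lemma Res.pi_ne (h : Res q π T) : π ≠ 0 := by
  rw [← norm_pos_iff, h.unif]; exact inv_pos.2 h.q_pos

lemma Res.pi_lt (h : Res q π T) : ‖π‖ < 1 := by
  rw [h.unif]; exact inv_lt_one_of_one_lt₀ h.q_one

lemma Res.pow_le (h : Res q π T) (k : ℕ) : ‖π ^ k‖ ≤ 1 := by
  rw [norm_pow]; exact pow_le_one₀ (norm_nonneg _) h.pi_lt.le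

lemma Res.mem_ball (h : Res q π T) {b t : K} (k : ℕ) (hb : ‖b‖ ≤ 1) (ht : ‖t‖ ≤ 1) :
    ‖b + π ^ k * t‖ ≤ 1 := by
  refine add_le hb ?_
  rw [norm_mul]
  exact mul_le_one₀ (h.pow_le k) (norm_nonneg _) ht

lemma Res.le_unif (h : Res q π T) {x : K} (hx : ‖x‖ < 1) : ‖x‖ ≤ ‖π‖ := by
  rcases eq_or_ne x 0 with rfl | h0
  · simp
  obtain ⟨m, hm⟩ := h.disc x h0
  rw [hm] at hx ⊢
  rw [h.unif, ← zpow_neg_one]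
  have : m < 0 := by
    by_contra hcon
    push Not at hcon
    have := one_le_zpow₀ h.q_one.le hcon
    linarith
  exact zpow_le_zpow_right₀ h.q_one.le (by omega)

/-- distinct representatives are at distance one -/
lemma Res.dist_one (h : Res q π T) {s t : K} (hs : s ∈ T) (ht : t ∈ T) (hst : s ≠ t) :
    ‖s - t‖ = 1 := by
  have hle : ‖s - t‖ ≤ 1 := by
    rw [sub_eq_add_neg]; exact add_le (h.le_one s hs) (by rw [norm_neg]; exact h.le_one t ht)
  refine le_antisymm hle ?_
  by_contra hlt
  push Not at hlt
  exact hst ((h.ex s (h.le_one s hs)).unique ⟨hs, by simp⟩ ⟨ht, hlt⟩)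

lemma Res.sum_shift (h : Res q π T) (G : K → ℂ)
    (hG : ∀ x x', ‖x‖ ≤ 1 → ‖x'‖ ≤ 1 → ‖x - x'‖ < 1 → G x = G x') {v : K} (hv : ‖v‖ ≤ 1) :
    ∑ t ∈ T, G (t + v) = ∑ t ∈ T, G t := by
  have hx : ∀ t ∈ T, ‖t + v‖ ≤ 1 := fun t ht => add_le (h.le_one t ht) hv
  choose! r hr _ using fun t (ht : t ∈ T) => h.ex (t + v) (hx t ht)
  have hinj : Set.InjOn r T := by
    intro s hs t ht hst
    by_contra hne
    have h1 := h.dist_one hs ht hne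
    have h2 := (hr s hs).2
    have h3 := (hr t ht).2
    rw [hst] at h2
    have := sub_lt h2 h3
    have e : s + v - r t - (t + v - r t) = s - t := by ring
    rw [e] at this
    linarith
  refine Finset.sum_bij (fun t _ => r t) (fun t ht => (hr t ht).1)
    (fun s hs t ht hst => hinj hs ht hst) ?_ ?_
  · intro b hb
    obtain ⟨a, ha, hab⟩ := Finset.surj_on_of_inj_on_of_card_le (fun t _ => r t)
      (fun t ht => (hr t ht).1) (fun s t hs ht hst => hinj hs ht hst) le_rfl b hb
    exact ⟨a, ha, hab.symm⟩
  · intro t ht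
    exact hG _ _ (hx t ht) (h.le_one _ (hr t ht).1) (hr t ht).2

/-- the average does not depend on the centre -/
lemma Res.avg_const (h : Res q π T) (F : K → ℂ) (N : ℕ)
    (hF : ∀ x x', ‖x‖ ≤ 1 → ‖x'‖ ≤ 1 → ‖x - x'‖ ≤ ‖π ^ N‖ → F x = F x') :
    ∀ n k b u, n + k = N → ‖b‖ ≤ 1 → ‖u‖ ≤ 1 →
      avg q π T F n (b + π ^ k * u) k = avg q π T F n b k := by
  intro n
  induction n with
  | zero =>
    intro k b u hk hb hu
    simp only [avg]
    have hk' : k = N := by omega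
    subst hk'
    refine hF _ _ (h.mem_ball k hb hu) hb ?_
    rw [add_sub_cancel_left, norm_mul]
    exact mul_le_of_le_one_right (norm_nonneg _) hu
  | succ n ih =>
    intro k b u hk hb hu
    simp only [avg]
    congr 1
    have := h.sum_shift (fun t => avg q π T F n (b + π ^ k * t) (k + 1)) ?_ hu
    · rw [← this]
      refine Finset.sum_congr rfl fun t _ => ?_
      congr 1; ring
    · intro x x' hx hx' hxx
      have hle : ‖(x - x') / π‖ ≤ 1 := by
        rw [norm_div]
        exact div_le_one_of_le₀ (h.le_unif hxx) (norm_nonneg _)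
      have := ih (k + 1) (b + π ^ k * x') ((x - x') / π) (by omega) (h.mem_ball k hb hx') hle
      rw [← this]
      congr 1
      have := h.pi_ne
      field_simp
      ring

lemma Res.norm_avg_succ (h : Res q π T) (F : K → ℂ) (n k : ℕ) (b : K) :
    ‖avg q π T F (n + 1) b k‖ ≤
      (q : ℝ)⁻¹ * ∑ t ∈ T, ‖avg q π T F n (b + π ^ k * t) (k + 1)‖ := by
  simp only [avg]
  rw [norm_mul, norm_inv, Complex.norm_natCast]
  gcongr
  exact norm_sum_le _ _

lemma Res.avg_succ_le (h : Res q π T) (F : K → ℂ) (n k : ℕ) (b : K) (C : ℝ)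
    (hC : ∀ t ∈ T, ‖avg q π T F n (b + π ^ k * t) (k + 1)‖ ≤ C) :
    ‖avg q π T F (n + 1) b k‖ ≤ C := by
  refine (h.norm_avg_succ F n k b).trans ?_
  have := Finset.sum_le_card_nsmul T _ C hC
  rw [h.card, nsmul_eq_mul] at this
  have hq := h.q_pos
  calc _ ≤ (q : ℝ)⁻¹ * (q * C) := by gcongr
    _ = C := by field_simp

lemma Res.avg_le (h : Res q π T) (F : K → ℂ) (hF : ∀ x, ‖x‖ ≤ 1 → ‖F x‖ ≤ 1) :
    ∀ n k b, ‖b‖ ≤ 1 → ‖avg q π T F n b k‖ ≤ 1 := by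
  intro n
  induction n with
  | zero => intro k b hb; simpa [avg] using hF b hb
  | succ n ih =>
    intro k b hb
    exact h.avg_succ_le F n k b 1 fun t ht => ih _ _ (h.mem_ball k hb (h.le_one t ht))

/-- average over a ball on which `F` is constant -/
lemma Res.avg_of_const (h : Res q π T) (F : K → ℂ) (z : ℂ) :
    ∀ n k b, (∀ u, ‖u‖ ≤ 1 → F (b + π ^ k * u) = z) → avg q π T F n b k = z := by
  intro n
  induction n with
  | zero => intro k b hF; simpa [avg] using hF 0 (by simp)
  | succ n ih =>
    intro k b hF
    simp only [avg]
    have : ∀ t ∈ T, avg q π T F n (b + π ^ k * t) (k + 1) = z := by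
      intro t ht
      refine ih _ _ fun u hu => ?_
      rw [← hF (t + π * u)]
      · congr 1; ring
      · simpa using h.mem_ball 1 (h.le_one t ht) hu
    rw [Finset.sum_congr rfl this, Finset.sum_const, h.card, nsmul_eq_mul]
    have : (q : ℂ) ≠ 0 := by exact_mod_cast h.q_pos.ne'
    field_simp

/-- descend to smaller balls -/
lemma Res.avg_zero_descend (h : Res q π T) (F : K → ℂ) (n R : ℕ) :
    ∀ s k b, k + s = R → (∀ u, ‖u‖ ≤ 1 → avg q π T F n (b + π ^ k * u) R = 0) →
      avg q π T F (n + s) b k = 0 := by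
  intro s
  induction s with
  | zero =>
    intro k b hk hF
    have hk' : k = R := by omega
    subst hk'
    simpa using hF 0 (by simp)
  | succ s ih =>
    intro k b hk hF
    rw [← add_assoc]
    simp only [avg]
    rw [Finset.sum_eq_zero, mul_zero]
    intro t ht
    refine ih _ _ (by omega) fun u hu => ?_
    rw [← hF (t + π * u)]
    · congr 1; ring
    · simpa using h.mem_ball 1 (h.le_one t ht) hu

end Avg

section Meas
variable {K : Type*} [NontriviallyNormedField K] [IsUltrametricDist K]
  [MeasurableSpace K] {q : ℕ} {π : K} {T : Finset K}

lemma aemeas_translate (μ : Measure K) [μ.IsAddHaarMeasure] (h : K) :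
    AEMeasurable (fun x => h + x) μ := by
  apply AEMeasurable.of_map_ne_zero
  have := Measure.IsAddLeftInvariant.map_add_left_eq_self (μ := μ) h
  change Measure.map (fun x => h + x) μ = μ at this
  rw [this]
  intro h0
  have := (isOpen_univ (X := K)).measure_ne_zero μ ⟨0, trivial⟩
  simp [h0] at this

lemma outer_translate_le (μ : Measure K) [μ.IsAddHaarMeasure] (h : K) (S : Set K) :
    μ ((fun x => h + x) ⁻¹' S) ≤ μ S := by
  calc μ ((fun x => h + x) ⁻¹' S) ≤ μ ((fun x => h + x) ⁻¹' (toMeasurable μ S)) :=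
        measure_mono (Set.preimage_mono (subset_toMeasurable μ S))
    _ = Measure.map (fun x => h + x) μ (toMeasurable μ S) := by
        rw [Measure.map_apply_of_aemeasurable (aemeas_translate μ h) (measurableSet_toMeasurable μ S)]
    _ = μ (toMeasurable μ S) := by
        have := Measure.IsAddLeftInvariant.map_add_left_eq_self (μ := μ) h
        change Measure.map (fun x => h + x) μ = μ at this
        rw [this]
    _ = μ S := measure_toMeasurable S

lemma outer_translate (μ : Measure K) [μ.IsAddHaarMeasure] (h : K) (S : Set K) :
    μ ((fun x => h + x) ⁻¹' S) = μ S := by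
  refine le_antisymm (outer_translate_le μ h S) ?_
  have := outer_translate_le μ (-h) ((fun x => h + x) ⁻¹' S)
  rw [← Set.preimage_comp] at this
  have e : ((fun x => h + x) ∘ fun x => -h + x) ⁻¹' S = S := by
    ext x; simp
  rwa [e] at this

lemma map_restrict (μ : Measure K) [μ.IsAddHaarMeasure] (h : K) (hh : ‖h‖ ≤ 1) :
    Measure.map (fun x => h + x) (μ.restrict {x : K | ‖x‖ ≤ 1}) = μ.restrict {x : K | ‖x‖ ≤ 1} := by
  ext A hA
  have hae : AEMeasurable (fun x => h + x) (μ.restrict {x : K | ‖x‖ ≤ 1}) :=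
    (aemeas_translate μ h).restrict
  rw [Measure.map_apply_of_aemeasurable hae hA, Measure.restrict_apply hA,
    Measure.restrict_apply₀ (hae.nullMeasurable hA), ← outer_translate μ h (A ∩ _)]
  congr 1
  ext x
  simp only [Set.mem_inter_iff, Set.mem_preimage, Set.mem_ofPred_eq]
  refine and_congr_right fun _ => ⟨fun hx => add_le hh hx, fun hx => ?_⟩
  have : x = (h + x) + (-h) := by ring
  rw [this]
  exact add_le hx (by rwa [norm_neg])

lemma avg_integral (hR : Res q π T) (μ : Measure K) [μ.IsAddHaarMeasure]
    (hμ : μ {x : K | ‖x‖ ≤ 1} = 1) (F : K → ℂ) (hb : ∀ x, ‖F x‖ ≤ 1)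
    (hF : AEStronglyMeasurable F (μ.restrict {x : K | ‖x‖ ≤ 1})) :
    ∀ n k, Integrable (fun x => avg q π T F n x k) (μ.restrict {x : K | ‖x‖ ≤ 1}) ∧
      ∫ x in {x : K | ‖x‖ ≤ 1}, avg q π T F n x k ∂μ = ∫ x in {x : K | ‖x‖ ≤ 1}, F x ∂μ := by
  have : IsFiniteMeasure (μ.restrict {x : K | ‖x‖ ≤ 1}) := ⟨by simp [hμ]⟩
  intro n
  induction n with
  | zero =>
    intro k
    simp only [avg]
    exact ⟨Integrable.of_bound hF 1 (Filter.Eventually.of_forall hb), trivial⟩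
  | succ n ih =>
    intro k
    simp only [avg]
    have key : ∀ t ∈ T, Integrable (fun x => avg q π T F n (x + π ^ k * t) (k + 1))
        (μ.restrict {x : K | ‖x‖ ≤ 1}) ∧
        ∫ x in {x : K | ‖x‖ ≤ 1}, avg q π T F n (x + π ^ k * t) (k + 1) ∂μ
          = ∫ x in {x : K | ‖x‖ ≤ 1}, F x ∂μ := by
      intro t ht
      have hle : ‖π ^ k * t‖ ≤ 1 := by
        have := hR.mem_ball k (b := 0) (by simp) (hR.le_one t ht)
        simpa using this
      have hm := map_restrict μ (π ^ k * t) hle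
      have hae : AEMeasurable (fun x => π ^ k * t + x) (μ.restrict {x : K | ‖x‖ ≤ 1}) :=
        (aemeas_translate μ _).restrict
      obtain ⟨i1, i2⟩ := ih (k + 1)
      simp only [add_comm _ (π ^ k * t)]
      constructor
      · rw [← hm] at i1
        exact i1.comp_aemeasurable hae
      · rw [← i2]
        conv_rhs => rw [← hm]
        rw [integral_map hae (by rw [hm]; exact i1.1)]
    refine ⟨(integrable_finsetSum _ fun t ht => (key t ht).1).const_mul _, ?_⟩
    rw [integral_const_mul, integral_finsetSum _ fun t ht => (key t ht).1,
      Finset.sum_congr rfl fun t ht => (key t ht).2, Finset.sum_const, hR.card, nsmul_eq_mul]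
    have : (q : ℂ) ≠ 0 := by exact_mod_cast hR.q_pos.ne'
    field_simp

lemma integral_eq_of_const (μ : Measure K) (s : Set K) (hμ : μ s = 1) (G : K → ℂ) (z : ℂ)
    (hG : AEStronglyMeasurable G (μ.restrict s)) (hz : ∀ x ∈ s, G x = z) :
    ∫ x in s, G x ∂μ = z := by
  obtain ⟨g, hg, hgG⟩ := hG
  rw [integral_congr_ae hgG]
  have hgz : g =ᵐ[μ.restrict s] fun _ => z := by
    have hms : MeasurableSet {x | g x = z} :=
      hg.measurableSet_eq_fun stronglyMeasurable_const
    change (μ.restrict s) {x | ¬ (g x = z)} = 0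
    have hc : {x | ¬ (g x = z)} = {x | g x = z}ᶜ := rfl
    rw [hc, Measure.restrict_apply hms.compl]
    have hN : (μ.restrict s) {x | ¬ (G x = g x)} = 0 := hgG
    have hN2 : μ ({x | ¬ (G x = g x)} ∩ s) = 0 := by
      rw [← Measure.restrict_apply₀ (NullMeasurableSet.of_null hN)]; exact hN
    refine measure_mono_null ?_ hN2
    rintro x ⟨hx1, hx2⟩
    refine ⟨fun h => hx1 ?_, hx2⟩
    change g x = z
    rw [← h, hz x hx2]
  rw [integral_congr_ae hgz]
  simp [Measure.real, hμ]

lemma norm_integral_le_avg (hR : Res q π T) (μ : Measure K) [μ.IsAddHaarMeasure]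
    (hμ : μ {x : K | ‖x‖ ≤ 1} = 1) (F F' : K → ℂ) (hb : ∀ x, ‖F x‖ ≤ 1)
    (hFF : ∀ x, ‖x‖ ≤ 1 → F x = F' x) (N : ℕ)
    (hF : ∀ x x', ‖x‖ ≤ 1 → ‖x'‖ ≤ 1 → ‖x - x'‖ ≤ ‖π ^ N‖ → F' x = F' x') :
    ‖∫ x in {x : K | ‖x‖ ≤ 1}, F x ∂μ‖ ≤ ‖avg q π T F' N 0 0‖ := by
  by_cases hm : AEStronglyMeasurable F (μ.restrict {x : K | ‖x‖ ≤ 1})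
  · obtain ⟨i1, i2⟩ := avg_integral hR μ hμ F hb hm N 0
    have hav : ∀ n k b, ‖b‖ ≤ 1 → avg q π T F n b k = avg q π T F' n b k := by
      intro n
      induction n with
      | zero => intro k b hb; simpa [avg] using hFF b hb
      | succ n ih =>
        intro k b hb
        simp only [avg]
        congr 1
        exact Finset.sum_congr rfl fun t ht => ih _ _ (hR.mem_ball k hb (hR.le_one t ht))
    rw [← i2, integral_eq_of_const μ _ hμ _ (avg q π T F' N 0 0) i1.1]
    intro x hx
    rw [hav _ _ _ hx]
    have := hR.avg_const F' N hF N 0 0 x (by omega) (by simp) hx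
    simpa using this
  · rw [integral_undef fun h => hm h.1]
    simp

end Meas

section Main
open VdC
variable {K : Type*} [NontriviallyNormedField K] [IsUltrametricDist K]
  {q : ℕ} {π : K} {T : Finset K}

lemma norm_nat_ge {p e : ℕ} (hq : 1 < q) (hp : p.Prime) (he : 0 < e)
    (hpe : ‖(p : K)‖ = (q : ℝ)⁻¹ ^ e) (n s : ℕ) (hn : n ≠ 0) (hns : n ≤ 2 ^ s) :
    (q : ℝ)⁻¹ ^ (e * s) ≤ ‖(n : K)‖ := by
  have hq1 : (1 : ℝ) < q := by exact_mod_cast hq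
  have hqi : (q : ℝ)⁻¹ < 1 := inv_lt_one_of_one_lt₀ hq1
  have hqp : 0 < (q : ℝ)⁻¹ := inv_pos.2 (by linarith)
  obtain ⟨v, u, hu, rfl⟩ := Nat.exists_eq_pow_mul_and_not_dvd hn p hp.ne_one
  have hu0 : u ≠ 0 := by rintro rfl; simp at hn
  have hpl : ‖(p : K)‖ < 1 := by rw [hpe]; exact pow_lt_one₀ hqp.le hqi he.ne'
  have hu1 : ‖(u : K)‖ = 1 := by
    refine le_antisymm (IsUltrametricDist.norm_natCast_le_one K u) ?_
    by_contra hlt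
    push Not at hlt
    have hcop : IsCoprime (p : ℤ) (u : ℤ) :=
      Nat.isCoprime_iff_coprime.2 ((Nat.Prime.coprime_iff_not_dvd hp).2 hu)
    obtain ⟨a, b, hab⟩ := hcop
    have hab' : (a : K) * p + b * u = 1 := by exact_mod_cast congrArg (Int.cast : ℤ → K) hab
    have h1 : ‖(a : K) * p‖ < 1 := by
      rw [norm_mul]
      exact mul_lt_one_of_nonneg_of_lt_one_right (IsUltrametricDist.norm_intCast_le_one K a)
        (norm_nonneg _) hpl
    have h2 : ‖(b : K) * u‖ < 1 := by
      rw [norm_mul]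
      exact mul_lt_one_of_nonneg_of_lt_one_right (IsUltrametricDist.norm_intCast_le_one K b)
        (norm_nonneg _) hlt
    have := add_lt h1 h2
    rw [hab', norm_one] at this
    exact lt_irrefl _ this
  have hvs : v ≤ s := by
    have h1 : 2 ^ v ≤ p ^ v := Nat.pow_le_pow_left hp.two_le v
    have h2 : p ^ v ≤ p ^ v * u := Nat.le_mul_of_pos_right _ (by omega)
    exact (Nat.pow_le_pow_iff_right (by norm_num : 1 < 2)).1 (h1.trans (h2.trans hns))
  push_cast
  rw [norm_mul, norm_pow, hu1, mul_one, hpe, ← pow_mul]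
  exact pow_le_pow_of_le_one hqp.le hqi.le (Nat.mul_le_mul_left e hvs)

lemma taylor_derivative (P : K[X]) (b : K) :
    taylor b (derivative P) = derivative (taylor b P) := by
  simp [taylor_apply, derivative_comp]

lemma taylor_iter_derivative (P : K[X]) (b : K) (n : ℕ) :
    taylor b (derivative^[n] P) = derivative^[n] (taylor b P) := by
  induction n with
  | zero => rfl
  | succ n ih => rw [Function.iterate_succ_apply', Function.iterate_succ_apply',
      taylor_derivative, ih]

lemma char_sum (hR : Res q π T) {ψ : K → ℂ} (hψ : IsAddChar ψ) {β : K} (hβ : ‖β‖ = 1) :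
    ∑ t ∈ T, ψ (β * t) = 0 := by
  obtain ⟨x, hx, hx1⟩ := hψ.nontriv
  have hβ0 : β ≠ 0 := by rw [← norm_pos_iff, hβ]; norm_num
  have hv : ‖x / β‖ ≤ 1 := by rw [norm_div, hβ, div_one]; exact hx
  have := hR.sum_shift (fun t => ψ (β * t)) ?_ hv
  · have e : ∀ t ∈ T, ψ (β * (t + x / β)) = ψ (β * t) * ψ x := by
      intro t _
      rw [← hψ.map_add]
      congr 1
      field_simp
    rw [Finset.sum_congr rfl e, ← Finset.sum_mul] at this
    have h2 : (∑ t ∈ T, ψ (β * t)) * (ψ x - 1) = 0 := by rw [mul_sub, this]; ring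
    rcases mul_eq_zero.1 h2 with h | h
    · exact h
    · exact absurd (sub_eq_zero.1 h) hx1
  · intro a b _ _ hab
    have e : β * a = β * (a - b) + β * b := by ring
    change ψ (β * a) = ψ (β * b)
    rw [e, hψ.map_add, hψ.triv, one_mul]
    rw [norm_mul, hβ, one_mul]; exact hab

lemma good_zero (hR : Res q π T) {ψ : K → ℂ} (hψ : IsAddChar ψ) {e : ℕ}
    (hnat : ∀ n s : ℕ, n ≠ 0 → n ≤ 2 ^ s → (q : ℝ)⁻¹ ^ (e * s) ≤ ‖(n : K)‖)
    (P : K[X]) (y b : K) (k R n : ℕ)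
    (hW : Wdeg (sh (derivative P) b (π ^ k)) 0)
    (hyR : ‖y * (derivative P).eval b‖ = (q : ℝ) ^ R) (hkR : k + e ≤ R) :
    avg q π T (fun x => ψ (y * P.eval x)) (n + 1 + (R - k)) b k = 0 := by
  have hqp := hR.q_pos
  have hq1 := hR.q_one
  refine hR.avg_zero_descend _ (n + 1) R (R - k) k b (by omega) fun u hu => ?_
  obtain ⟨hW', hn'⟩ := hW.taylor hu
  rw [taylor_sh] at hW' hn'
  simp only [sh_coeff, pow_zero, mul_one, taylor_coeff_zero] at hn'
  set b' := b + π ^ k * u with hb'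
  have hyR' : ‖y * (derivative P).eval b'‖ = (q : ℝ) ^ R := by
    rw [norm_mul, hn', ← norm_mul, hyR]
  have hy0 : 0 < ‖y‖ := by
    rw [norm_pos_iff]; rintro rfl
    rw [zero_mul, norm_zero] at hyR
    exact (pow_pos hqp R).ne hyR
  set β := y * (derivative P).eval b' * π ^ R with hβd
  have hβ : ‖β‖ = 1 := by
    rw [hβd, norm_mul, hyR', norm_pow, hR.unif, ← mul_pow, mul_inv_cancel₀ hqp.ne', one_pow]
  -- the small terms
  have hsmall : ∀ i : ℕ, ∀ v : K, ‖v‖ ≤ 1 →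
      ‖y * ((taylor b' P).coeff (i + 1 + 1) * (π ^ R * v) ^ (i + 1 + 1))‖ < 1 := by
    intro i v hv
    have h1 := hW'.2.2 (i + 1) (by omega)
    simp only [sh_coeff, pow_zero, mul_one, taylor_coeff_zero] at h1
    rw [taylor_derivative, coeff_derivative] at h1
    have h2 := hnat (i + 2) (i + 1) (by omega) (by
      have : i + 1 < 2 ^ (i + 1) := Nat.lt_two_pow_self
      omega)
    have e2 : (((i + 1 : ℕ) : K) + 1) = ((i + 2 : ℕ) : K) := by push_cast; ring
    rw [e2, norm_mul, norm_mul, ← pow_mul, norm_pow, hR.unif] at h1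
    set D := ‖(taylor b' P).coeff (i + 1 + 1)‖ with hD
    have hD0 : 0 ≤ D := norm_nonneg _
    have hqi0 : 0 < (q : ℝ)⁻¹ := inv_pos.2 hqp
    have hqi1 : (q : ℝ)⁻¹ ≤ 1 := inv_le_one_of_one_le₀ hq1.le
    have h3 : D * (q : ℝ)⁻¹ ^ (R * (i + 1)) < ‖(derivative P).eval b'‖ := by
      refine lt_of_le_of_lt ?_ h1
      calc D * (q : ℝ)⁻¹ ^ (R * (i + 1)) ≤ D * (q : ℝ)⁻¹ ^ (e * (i + 1) + k * (i + 1)) := by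
            gcongr D * ?_
            apply pow_le_pow_of_le_one hqi0.le hqi1
            calc _ = (k + e) * (i + 1) := by ring
              _ ≤ _ := Nat.mul_le_mul_right _ hkR
        _ = D * (q : ℝ)⁻¹ ^ (e * (i + 1)) * (q : ℝ)⁻¹ ^ (k * (i + 1)) := by rw [pow_add]; ring
        _ ≤ _ := by gcongr
    rw [norm_mul, norm_mul, norm_pow, norm_mul, norm_pow, hR.unif, ← hD]
    have hv2 : ((q : ℝ)⁻¹ ^ R * ‖v‖) ^ (i + 1 + 1) ≤ (q : ℝ)⁻¹ ^ (R * (i + 1)) * (q : ℝ)⁻¹ ^ R := by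
      rw [← pow_add, mul_pow, ← pow_mul]
      calc _ ≤ (q : ℝ)⁻¹ ^ (R * (i + 1 + 1)) * 1 := by
            gcongr; exact pow_le_one₀ (norm_nonneg _) hv
        _ = _ := by rw [mul_one]; congr 1
    calc _ ≤ ‖y‖ * (D * ((q : ℝ)⁻¹ ^ (R * (i + 1)) * (q : ℝ)⁻¹ ^ R)) := by gcongr
      _ = ‖y‖ * (D * (q : ℝ)⁻¹ ^ (R * (i + 1))) * (q : ℝ)⁻¹ ^ R := by ring
      _ < ‖y‖ * ‖(derivative P).eval b'‖ * (q : ℝ)⁻¹ ^ R := by gcongr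
      _ = 1 := by
        rw [← norm_mul, hyR', ← mul_pow, mul_inv_cancel₀ hqp.ne', one_pow]
  have hphase : ∀ v : K, ‖v‖ ≤ 1 →
      ψ (y * P.eval (b' + π ^ R * v)) = ψ (y * P.eval b') * ψ (β * v) := by
    intro v hv
    have e1 : P.eval (b' + π ^ R * v) = (taylor b' P).eval (π ^ R * v) := by
      rw [taylor_eval, add_comm]
    rw [e1, eval_eq_sum_range' (n := P.natDegree + 1 + 1)
      (by rw [natDegree_taylor]; omega), Finset.sum_range_succ', Finset.sum_range_succ']
    have e3 : (taylor b' P).coeff (0 + 1) = (derivative P).eval b' := by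
      rw [zero_add, taylor_coeff_one]
    rw [e3, taylor_coeff_zero, mul_add, mul_add, hψ.map_add, hψ.map_add, Finset.mul_sum,
      hψ.triv _ (sum_lt _ _ one_pos fun i _ => hsmall i v hv)]
    rw [one_mul, mul_comm]
    congr 2
    · simp
    · rw [hβd]; ring
  simp only [avg]
  have hterm : ∀ t ∈ T, avg q π T (fun x => ψ (y * P.eval x)) n (b' + π ^ R * t) (R + 1)
      = ψ (y * P.eval b') * ψ (β * t) := by
    intro t ht
    refine hR.avg_of_const _ _ _ _ _ fun w hw => ?_
    have e4 : b' + π ^ R * t + π ^ (R + 1) * w = b' + π ^ R * (t + π ^ 1 * w) := by ring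
    rw [e4, hphase _ (hR.mem_ball 1 (hR.le_one t ht) hw), mul_add, hψ.map_add,
      hψ.triv (β * (π ^ 1 * w)), mul_one]
    rw [norm_mul, hβ, one_mul, norm_mul, pow_one]
    exact mul_lt_one_of_nonneg_of_lt_one_left (norm_nonneg _) hR.pi_lt hw
  rw [Finset.sum_congr rfl hterm, ← Finset.mul_sum, char_sum hR hψ hβ, mul_zero, mul_zero]

lemma tree_bound (hR : Res q π T) (F : K → ℂ) (hF : ∀ x, ‖x‖ ≤ 1 → ‖F x‖ ≤ 1) (H : K[X])
    (r N : ℕ) (hrN : r ≤ N)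
    (hgood : ∀ k b, k ≤ r → ‖b‖ ≤ 1 → Wdeg (sh H b (π ^ k)) 0 → avg q π T F (N - k) b k = 0) :
    ∀ s k b d, k + s = r → ‖b‖ ≤ 1 → Wdeg (sh H b (π ^ k)) d →
      ‖avg q π T F (N - k) b k‖ ≤ (q : ℝ) ^ d * (q : ℝ)⁻¹ ^ s := by
  have hqp := hR.q_pos
  have hq1 := hR.q_one
  intro s
  induction s with
  | zero =>
    intro k b d _ hb _
    refine (hR.avg_le F hF _ k b hb).trans ?_
    rw [pow_zero, mul_one]
    exact one_le_pow₀ hq1.le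
  | succ s ih =>
    intro k b d hk hb hW
    have hNk : N - k = (N - (k + 1)) + 1 := by omega
    rcases Nat.eq_zero_or_pos d with rfl | hd
    · rw [hgood k b (by omega) hb hW, norm_zero]; positivity
    have hchild : ∀ t, sh H (b + π ^ k * t) (π ^ (k + 1))
        = (taylor t (sh H b (π ^ k))).comp (C π * X) := by
      intro t; rw [taylor_sh, sh_sh, pow_succ]
    have hmem : ∀ t ∈ T, ‖b + π ^ k * t‖ ≤ 1 := fun t ht => hR.mem_ball k hb (hR.le_one t ht)
    by_cases hex : ∃ t ∈ T, Wdeg (sh H (b + π ^ k * t) (π ^ (k + 1))) d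
    · obtain ⟨t, ht, hWt⟩ := hex
      have hz : ∀ t' ∈ T, t' ≠ t →
          ‖avg q π T F (N - (k + 1)) (b + π ^ k * t') (k + 1)‖ = 0 := by
        intro t' ht' hne
        rw [norm_eq_zero]
        refine hgood _ _ (by omega) (hmem t' ht') ?_
        rw [hchild] at hWt ⊢
        exact other_child hW hd hR.pi_ne hR.pi_lt (hR.le_one t ht) (hR.le_one t' ht')
          (hR.dist_one ht' ht hne) hWt
      rw [hNk]
      refine (hR.norm_avg_succ F _ k b).trans ?_
      rw [Finset.sum_eq_single_of_mem t ht hz]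
      have := ih (k + 1) (b + π ^ k * t) d (by omega) (hmem t ht) hWt
      calc _ ≤ (q : ℝ)⁻¹ * ((q : ℝ) ^ d * (q : ℝ)⁻¹ ^ s) := by gcongr
        _ = _ := by ring
    · push Not at hex
      rw [hNk]
      refine hR.avg_succ_le F _ k b _ fun t ht => ?_
      obtain ⟨d', hd', hW'⟩ := ((hW.taylor (hR.le_one t ht)).1).scale hR.pi_ne hR.pi_lt.le
      rw [← hchild] at hW'
      have hne : d' ≠ d := by rintro rfl; exact hex t ht hW'
      refine (ih (k + 1) (b + π ^ k * t) d' (by omega) (hmem t ht) hW').trans ?_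
      obtain ⟨d0, rfl⟩ : ∃ d0, d = d0 + 1 := ⟨d - 1, by omega⟩
      calc (q : ℝ) ^ d' * (q : ℝ)⁻¹ ^ s ≤ (q : ℝ) ^ d0 * (q : ℝ)⁻¹ ^ s := by
            gcongr
            · exact hq1.le
            · omega
        _ = _ := by rw [pow_succ, pow_succ]; field_simp

lemma avg_descend_le (hR : Res q π T) (F : K → ℂ) (n R : ℕ) (C : ℝ)
    (h : ∀ b, ‖b‖ ≤ 1 → ‖avg q π T F n b R‖ ≤ C) :
    ∀ s k b, k + s = R → ‖b‖ ≤ 1 → ‖avg q π T F (n + s) b k‖ ≤ C := by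
  intro s
  induction s with
  | zero => intro k b hk hb; have : k = R := by omega
            subst this; exact h b hb
  | succ s ih =>
    intro k b hk hb
    rw [← add_assoc]
    exact hR.avg_succ_le F _ k b C fun t ht =>
      ih _ _ (by omega) (hR.mem_ball k hb (hR.le_one t ht))

end Main

section Final
open VdC
variable {K : Type*} [NontriviallyNormedField K] [IsUltrametricDist K]
  {q : ℕ} {π : K} {T : Finset K}

lemma poly_bound (hR : Res q π T) {ψ : K → ℂ} (hψ : IsAddChar ψ) {e : ℕ}
    (hnat : ∀ n s : ℕ, n ≠ 0 → n ≤ 2 ^ s → (q : ℝ)⁻¹ ^ (e * s) ≤ ‖(n : K)‖)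
    (P : K[X]) (y : K) (hy : y ≠ 0) (M : ℕ) (δ : ℝ) (hδ : 0 < δ)
    (hQ0 : ‖(derivative^[M] (derivative P)).coeff 0‖ = δ)
    (hQ : ∀ i, 0 < i → ‖(derivative^[M] (derivative P)).coeff i‖ < δ)
    (B : ℝ) (hB : ∀ i, ‖P.coeff i‖ ≤ B) (N : ℕ) (hN : ‖y‖ * B < (q : ℝ) ^ N)
    (r : ℕ) (hr : (q : ℝ) ^ (r * (M + 1)) ≤ ‖y‖ * (δ * (q : ℝ)⁻¹ ^ e)) :
    ‖avg q π T (fun x => ψ (y * P.eval x)) N 0 0‖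
      ≤ (q : ℝ) ^ M * (q : ℝ) ^ (e * (M + 1)) * (q : ℝ)⁻¹ ^ r := by
  have hqp := hR.q_pos
  have hq1 := hR.q_one
  have hqi0 : 0 < (q : ℝ)⁻¹ := inv_pos.2 hqp
  have hqi1 : (q : ℝ)⁻¹ ≤ 1 := inv_le_one_of_one_le₀ hq1.le
  have hy0 := norm_pos_iff.2 hy
  have hF : ∀ x : K, ‖x‖ ≤ 1 → ‖ψ (y * P.eval x)‖ ≤ 1 := fun x _ => (hψ.norm_eq _).le
  set H := derivative P with hH
  have hB0 : 0 ≤ B := (norm_nonneg _).trans (hB 0)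
  -- Taylor coefficients of `H`
  have hcoef : ∀ b i, (taylor b (derivative^[M] H)).coeff i
      = ((M.factorial * (i + M).choose M : ℕ) : K) * (taylor b H).coeff (i + M) := by
    intro b i
    rw [taylor_iter_derivative, coeff_iterate_derivative, nsmul_eq_mul,
      Nat.descFactorial_eq_factorial_mul_choose]
  have hQne : (derivative^[M] H).coeff 0 ≠ 0 := by rw [← norm_pos_iff, hQ0]; exact hδ
  have htop : ∀ b : K, ‖b‖ ≤ 1 → ‖(M.factorial : K)‖ * ‖(taylor b H).coeff M‖ = δ := by
    intro b hb
    have := taylor_coeff_top (derivative^[M] H) 0 hQne (by rw [hQ0]; exact hQ) b hb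
    rw [hcoef, hQ0] at this
    simpa using this
  have hoth : ∀ b : K, ‖b‖ ≤ 1 → ∀ i, 0 < i →
      ‖(M.factorial : K)‖ * (‖(((i + M).choose M : ℕ) : K)‖ * ‖(taylor b H).coeff (i + M)‖) < δ := by
    intro b hb i hi
    have := taylor_coeff_lt (derivative^[M] H) b hb i δ hδ fun k hk => hQ k (by omega)
    rw [hcoef] at this
    push_cast at this
    rwa [norm_mul, norm_mul, mul_assoc] at this
  have hfac : 0 < ‖(M.factorial : K)‖ := by
    refine (norm_nonneg _).lt_of_ne fun h0 => ?_
    have := htop 0 (by simp)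
    rw [← h0, zero_mul] at this
    exact hδ.ne this
  have hfac1 : ‖(M.factorial : K)‖ ≤ 1 := IsUltrametricDist.norm_natCast_le_one K _
  have hMge : ∀ b : K, ‖b‖ ≤ 1 → δ ≤ ‖(taylor b H).coeff M‖ := by
    intro b hb
    rw [← htop b hb]
    exact mul_le_of_le_one_left (norm_nonneg _) hfac1
  -- every ball of radius `q ^ (- e m)` has Weierstrass degree at most `M`
  have hW0 : ∀ b : K, ‖b‖ ≤ 1 → ∃ d ≤ M, Wdeg (sh H b (π ^ (e * (M + 1)))) d := by
    intro b hb
    have hpos : 0 < ‖(taylor b H).coeff M‖ := hδ.trans_le (hMge b hb)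
    apply exists_Wdeg
    · rw [sh_coeff]
      exact mul_ne_zero (norm_pos_iff.1 hpos) (pow_ne_zero _ (pow_ne_zero _ hR.pi_ne))
    · intro i hi
      obtain ⟨l, rfl⟩ : ∃ l, i = l + 1 + M := ⟨i - M - 1, by omega⟩
      have h1 := hoth b hb (l + 1) (by omega)
      rw [← htop b hb] at h1
      have h2 := lt_of_mul_lt_mul_left h1 hfac.le
      have h3 := hnat ((l + 1 + M).choose M) (l + 1 + M)
        (Nat.choose_pos (by omega)).ne' (Nat.choose_le_two_pow _ _)
      have h4 : (q : ℝ)⁻¹ ^ (e * (M + 1) * (l + 1)) ≤ (q : ℝ)⁻¹ ^ (e * (l + 1 + M)) := by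
        apply pow_le_pow_of_le_one hqi0.le hqi1
        rw [mul_assoc]
        apply Nat.mul_le_mul_left
        nlinarith [Nat.zero_le (M * l)]
      have hX : ((q : ℝ)⁻¹ ^ (e * (M + 1))) ^ (l + 1) = (q : ℝ)⁻¹ ^ (e * (M + 1) * (l + 1)) :=
        (pow_mul _ _ _).symm
      have hqpos : 0 < ((q : ℝ)⁻¹ ^ (e * (M + 1))) ^ M := pow_pos (pow_pos hqi0 _) _
      rw [sh_coeff, sh_coeff, norm_mul, norm_mul, norm_pow, norm_pow, norm_pow, norm_pow, hR.unif,
        pow_add _ (l + 1) M, ← mul_assoc, hX]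
      refine mul_lt_mul_of_pos_right ?_ hqpos
      calc ‖(taylor b H).coeff (l + 1 + M)‖ * (q : ℝ)⁻¹ ^ (e * (M + 1) * (l + 1))
          ≤ ‖(taylor b H).coeff (l + 1 + M)‖ * ‖(((l + 1 + M).choose M : ℕ) : K)‖ := by
            gcongr; exact h4.trans h3
        _ < _ := by rw [mul_comm]; exact h2
  -- vanishing on good balls
  have hHB : ∀ b : K, ‖b‖ ≤ 1 → ‖H.eval b‖ ≤ B := by
    intro b hb
    rw [← taylor_coeff_zero]
    refine taylor_coeff_le H b hb 0 B hB0 fun k _ => ?_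
    rw [hH, coeff_derivative, norm_mul]
    have : ‖((k : K) + 1)‖ ≤ 1 := by exact_mod_cast IsUltrametricDist.norm_natCast_le_one K (k + 1)
    exact (mul_le_of_le_one_right (norm_nonneg _) this).trans (hB _)
  have hgood : ∀ k b, k ≤ r → ‖b‖ ≤ 1 → Wdeg (sh H b (π ^ k)) 0 →
      r ≤ N ∧ avg q π T (fun x => ψ (y * P.eval x)) (N - k) b k = 0 := by
    intro k b hk hb hW
    have h1 := hW.2.1 M
    have hne := hW.1
    simp only [sh_coeff, pow_zero, mul_one, taylor_coeff_zero] at h1 hne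
    rw [norm_mul, ← pow_mul, norm_pow, hR.unif] at h1
    have h2 : δ * (q : ℝ)⁻¹ ^ (r * M) ≤ ‖H.eval b‖ := by
      refine le_trans ?_ h1
      have := hMge b hb
      gcongr ?_ * ?_
      exact pow_le_pow_of_le_one hqi0.le hqi1 (Nat.mul_le_mul_right _ hk)
    have h3 : (q : ℝ) ^ (r + e) ≤ ‖y * H.eval b‖ := by
      rw [norm_mul]
      have h5 : (q : ℝ) ^ (r + e) = (q : ℝ) ^ (r * (M + 1)) * ((q : ℝ)⁻¹ ^ (r * M) * (q : ℝ) ^ e) := by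
        rw [inv_pow, mul_add, pow_add, pow_add, mul_one]
        field_simp
      rw [h5]
      calc _ ≤ ‖y‖ * (δ * (q : ℝ)⁻¹ ^ e) * ((q : ℝ)⁻¹ ^ (r * M) * (q : ℝ) ^ e) := by gcongr
        _ = ‖y‖ * (δ * (q : ℝ)⁻¹ ^ (r * M)) := by rw [inv_pow, inv_pow]; field_simp
        _ ≤ _ := by gcongr
    obtain ⟨z, hz⟩ := hR.disc (y * H.eval b) (mul_ne_zero hy hne)
    have hz1 : ((r + e : ℕ) : ℤ) ≤ z := by
      rw [hz, ← zpow_natCast] at h3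
      exact (zpow_le_zpow_iff_right₀ hq1).1 h3
    obtain ⟨R, rfl⟩ := Int.eq_ofNat_of_zero_le (le_trans (Int.natCast_nonneg _) hz1)
    have hz2 : r + e ≤ R := by exact_mod_cast hz1
    have hz' : ‖y * H.eval b‖ = (q : ℝ) ^ R := by rw [hz]; exact zpow_natCast _ _
    have hRN : R < N := by
      have : (q : ℝ) ^ R < (q : ℝ) ^ N := by
        rw [← hz', norm_mul]
        refine lt_of_le_of_lt ?_ hN
        have := hHB b hb
        gcongr
      exact (pow_lt_pow_iff_right₀ hq1).1 this
    refine ⟨by omega, ?_⟩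
    have := good_zero hR hψ hnat P y b k R (N - R - 1) hW hz' (by omega)
    have e1 : N - R - 1 + 1 + (R - k) = N - k := by omega
    rwa [e1] at this
  have hrN : r ≤ N := by
    by_contra hcon
    push Not at hcon
    have h1 : δ ≤ B := by
      refine (hMge 0 (by simp)).trans ?_
      refine taylor_coeff_le H 0 (by simp) M B hB0 fun k _ => ?_
      rw [hH, coeff_derivative, norm_mul]
      have : ‖((k : K) + 1)‖ ≤ 1 := by
        exact_mod_cast IsUltrametricDist.norm_natCast_le_one K (k + 1)
      exact (mul_le_of_le_one_right (norm_nonneg _) this).trans (hB _)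
    have h2 : (q : ℝ) ^ r ≤ (q : ℝ) ^ (r * (M + 1)) :=
      pow_le_pow_right₀ hq1.le (by nlinarith [Nat.zero_le (r * M)])
    have h3 : (q : ℝ) ^ N ≤ (q : ℝ) ^ r := pow_le_pow_right₀ hq1.le hcon.le
    have h4 : ‖y‖ * (δ * (q : ℝ)⁻¹ ^ e) ≤ ‖y‖ * (B * 1) := by
      gcongr; exact pow_le_one₀ hqi0.le hqi1
    rw [mul_one] at h4
    linarith
  set r0 := e * (M + 1) with hr0
  rcases le_or_gt r0 r with hle | hlt
  · have key : ∀ b : K, ‖b‖ ≤ 1 → ‖avg q π T (fun x => ψ (y * P.eval x)) (N - r0) b r0‖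
        ≤ (q : ℝ) ^ M * (q : ℝ)⁻¹ ^ (r - r0) := by
      intro b hb
      obtain ⟨d, hd, hW⟩ := hW0 b hb
      refine (tree_bound hR _ hF H r N hrN (fun k b hk hb hW => (hgood k b hk hb hW).2)
        (r - r0) r0 b d (by omega) hb hW).trans ?_
      gcongr
      exact hq1.le
    have := avg_descend_le hR _ (N - r0) r0 _ key r0 0 0 (by omega) (by simp)
    rw [Nat.sub_add_cancel (by omega)] at this
    refine this.trans (le_of_eq ?_)
    rw [mul_assoc]
    congr 1
    obtain ⟨s, rfl⟩ := Nat.exists_eq_add_of_le hle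
    rw [Nat.add_sub_cancel_left, pow_add, ← mul_assoc, ← mul_pow, mul_inv_cancel₀ hqp.ne',
      one_pow, one_mul]
  · refine (hR.avg_le _ hF N 0 0 (by simp)).trans ?_
    obtain ⟨s, hs⟩ := Nat.exists_eq_add_of_le hlt.le
    rw [hs, pow_add, mul_assoc, mul_comm ((q : ℝ) ^ r), mul_assoc, ← mul_pow,
      mul_inv_cancel₀ hqp.ne', one_pow, mul_one]
    exact one_le_mul_of_one_le_of_one_le (one_le_pow₀ hq1.le) (one_le_pow₀ hq1.le)

lemma dcoeff_iter (a : ℕ → K) (j i : ℕ) :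
    (dcoeff^[j] a) i = (((i + j).descFactorial j : ℕ) : K) * a (i + j) := by
  induction j generalizing i with
  | zero => simp
  | succ j ih =>
    rw [Function.iterate_succ_apply', dcoeff, ih]
    have e : i + 1 + j = i + (j + 1) := by ring
    rw [← mul_assoc, ← Nat.cast_mul, e]
    congr 2
    have h1 : (i + (j + 1)).descFactorial (j + 1)
        = (i + (j + 1) - j) * (i + (j + 1)).descFactorial j := Nat.descFactorial_succ _ _
    rw [h1]; congr 1; omega

lemma poly_lipschitz (P : K[X]) (B : ℝ) (hB : ∀ i, ‖P.coeff i‖ ≤ B) {x x' : K}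
    (hx : ‖x‖ ≤ 1) (hx' : ‖x'‖ ≤ 1) : ‖P.eval x' - P.eval x‖ ≤ B * ‖x' - x‖ := by
  have hB0 : 0 ≤ B := (norm_nonneg _).trans (hB 0)
  have hd : ‖x' - x‖ ≤ 1 := by
    rw [sub_eq_add_neg]; exact add_le hx' (by rwa [norm_neg])
  have e1 : P.eval x' = (taylor x P).eval (x' - x) := by rw [taylor_eval, sub_add_cancel]
  rw [e1, eval_eq_sum_range, Finset.sum_range_succ', pow_zero, mul_one, taylor_coeff_zero,
    add_sub_cancel_right]
  refine IsUltrametricDist.norm_sum_le_of_forall_le_of_nonneg (by positivity) fun i _ => ?_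
  rw [norm_mul, norm_pow, pow_succ]
  have h1 := taylor_coeff_le P x hx (i + 1) B hB0 fun k _ => hB k
  have h2 : ‖x' - x‖ ^ i ≤ 1 := pow_le_one₀ (norm_nonneg _) hd
  calc _ ≤ B * (1 * ‖x' - x‖) := by gcongr
    _ = _ := by ring

lemma pseval_trunc [CompleteSpace K] (a : ℕ → K) (ha : IsConvergent a) (n : ℕ) (ε : ℝ)
    (hε : 0 ≤ ε) (h : ∀ i, n ≤ i → ‖a i‖ ≤ ε) (x : K) (hx : ‖x‖ ≤ 1) :
    ‖pseval a x - ∑ i ∈ Finset.range n, a i * x ^ i‖ ≤ ε := by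
  have hle : ∀ i, ‖a i * x ^ i‖ ≤ ‖a i‖ := by
    intro i
    rw [norm_mul, norm_pow]
    exact mul_le_of_le_one_right (norm_nonneg _) (pow_le_one₀ (norm_nonneg _) hx)
  have hs : Summable fun i => a i * x ^ i := by
    apply NonarchimedeanAddGroup.summable_of_tendsto_cofinite_zero
    rw [Nat.cofinite_eq_atTop, tendsto_zero_iff_norm_tendsto_zero]
    exact squeeze_zero (fun _ => norm_nonneg _) hle ha
  rw [pseval, ← hs.sum_add_tsum_nat_add n, add_sub_cancel_left]
  exact IsUltrametricDist.norm_tsum_le_of_forall_le_of_nonneg hε fun i =>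
    (hle _).trans (h _ (by omega))

end Final

end VdCProof

open VdC in
/-- Corollary 3.3, generalizing Rogers.  Suppose `f^{(j)} ∈ O_K⦃x⦄`
is regular of degree `m - j > 0` for some `j ≥ 0`.  If `K` has characteristic zero,
then there is a constant `c_{m,K}` depending only on `m`, `q_K` and the ramification
degree `e = ord(p_K)` with `|∫_{O_K} ψ(y f(t)) dt| ≤ c_{m,K} |y|^{-1/m}` for all
nonzero `y ∈ K`. -/
theorem statement8 (m q : ℕ) (hq : 1 < q) :
    ∃ c : ℕ → ℝ,
      ∀ (K : Type) [NontriviallyNormedField K] [CharZero K] [MeasurableSpace K]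
        (μ : Measure K), μ.IsAddHaarMeasure → μ {x : K | ‖x‖ ≤ 1} = 1 →
        IsLocalField K q → ∀ p e : ℕ, IsResidueData K q p e →
        ∀ ψ : K → ℂ, IsAddChar ψ →
        ∀ (a : ℕ → K) (j : ℕ), IsConvergent a → j < m →
          IsRegularOfDeg (dcoeff^[j] a) (m - j) →
          ∀ y : K, y ≠ 0 →
            ‖∫ x in {x : K | ‖x‖ ≤ 1}, ψ (y * pseval a x) ∂μ‖
              ≤ c e * ‖y‖ ^ (-(1 : ℝ) / m) := by
  refine ⟨fun e => (q : ℝ) ^ (m + e * m + (e * m ^ 2 + e)), ?_⟩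
  intro K _ _ _ μ hHaar hμ hK p e hpe ψ hψ a j ha hjm hreg y hy
  haveI : IsUltrametricDist K :=
    IsUltrametricDist.isUltrametricDist_of_isNonarchimedean_norm hK.nonarch
  haveI := hK.complete
  haveI := hHaar
  obtain ⟨π, hπ⟩ := hK.exists_unif
  obtain ⟨T, hT1, hT2, hT3⟩ := hK.residue
  have hR : VdCProof.Res q π T := ⟨hq, hT1, hT2, hT3, hπ, hK.discrete⟩
  have hqp := hR.q_pos
  have hq1 := hR.q_one
  have hqi0 : 0 < (q : ℝ)⁻¹ := inv_pos.2 hqp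
  have hqi1 : (q : ℝ)⁻¹ ≤ 1 := inv_le_one_of_one_le₀ hq1.le
  have hy0 := norm_pos_iff.2 hy
  obtain ⟨hp, -, he, hpn⟩ := hpe
  have hnat : ∀ n s : ℕ, n ≠ 0 → n ≤ 2 ^ s → (q : ℝ)⁻¹ ^ (e * s) ≤ ‖(n : K)‖ :=
    fun n s => VdCProof.norm_nat_ge hq hp he hpn n s
  -- truncation
  obtain ⟨n0, hn0⟩ : ∃ n0, ∀ i, n0 ≤ i → ‖a i‖ < (2 * ‖y‖)⁻¹ := by
    have := ha.eventually (gt_mem_nhds (show (0 : ℝ) < (2 * ‖y‖)⁻¹ by positivity))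
    exact Filter.eventually_atTop.1 this
  set n := max n0 (m + 1) with hn
  set P : Polynomial K := ∑ i ∈ Finset.range n, Polynomial.monomial i (a i) with hP
  have hPc : ∀ i, P.coeff i = if i < n then a i else 0 := by
    intro i
    rw [hP, Polynomial.finsetSum_coeff]
    simp [Polynomial.coeff_monomial]
  have hPe : ∀ x, P.eval x = ∑ i ∈ Finset.range n, a i * x ^ i := by
    intro x
    rw [hP, Polynomial.eval_finsetSum]
    simp
  have hFF : ∀ x : K, ‖x‖ ≤ 1 → ψ (y * pseval a x) = ψ (y * P.eval x) := by
    intro x hx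
    have h1 := VdCProof.pseval_trunc a ha n (2 * ‖y‖)⁻¹ (by positivity)
      (fun i hi => (hn0 i ((le_max_left _ _).trans hi)).le) x hx
    rw [← hPe] at h1
    have e1 : y * pseval a x = y * (pseval a x - P.eval x) + y * P.eval x := by ring
    rw [e1, hψ.map_add, hψ.triv, one_mul]
    rw [norm_mul]
    calc _ ≤ ‖y‖ * (2 * ‖y‖)⁻¹ := by gcongr
      _ = 1 / 2 := by field_simp
      _ < 1 := by norm_num
  obtain ⟨B, hB⟩ : ∃ B, ∀ i, ‖P.coeff i‖ ≤ B := by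
    refine ⟨∑ i ∈ Finset.range n, ‖a i‖, fun i => ?_⟩
    rw [hPc]
    split_ifs with hi
    · exact Finset.single_le_sum (f := fun i => ‖a i‖) (fun _ _ => norm_nonneg _)
        (Finset.mem_range.2 hi)
    · rw [norm_zero]; exact Finset.sum_nonneg fun _ _ => norm_nonneg _
  obtain ⟨N, hN⟩ := pow_unbounded_of_one_lt (‖y‖ * B) hq1
  have hB0 : 0 ≤ B := (norm_nonneg _).trans (hB 0)
  have hper : ∀ x x' : K, ‖x‖ ≤ 1 → ‖x'‖ ≤ 1 → ‖x - x'‖ ≤ ‖π ^ N‖ →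
      ψ (y * P.eval x) = ψ (y * P.eval x') := by
    intro x x' hx hx' hxx
    have h1 := VdCProof.poly_lipschitz P B hB hx' hx
    have e1 : y * P.eval x = y * (P.eval x - P.eval x') + y * P.eval x' := by ring
    rw [e1, hψ.map_add, hψ.triv, one_mul]
    rw [norm_pow, hπ] at hxx
    rw [norm_mul]
    calc _ ≤ ‖y‖ * (B * (q : ℝ)⁻¹ ^ N) := by
          gcongr; exact h1.trans (by gcongr)
      _ = ‖y‖ * B * (q : ℝ)⁻¹ ^ N := by ring
      _ < (q : ℝ) ^ N * (q : ℝ)⁻¹ ^ N := by gcongr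
      _ = 1 := by rw [← mul_pow, mul_inv_cancel₀ hqp.ne', one_pow]
  have hInt := VdCProof.norm_integral_le_avg hR μ hμ (fun x => ψ (y * pseval a x))
    (fun x => ψ (y * P.eval x)) (fun x => (hψ.norm_eq _).le) hFF N hper
  refine hInt.trans ?_
  -- the `m`-th derivative
  obtain ⟨M, rfl⟩ : ∃ M, m = M + 1 := ⟨m - 1, by omega⟩
  set δ := ‖((M + 1 - j).factorial : K)‖ with hδd
  have hQc : ∀ i, (Polynomial.derivative^[M] (Polynomial.derivative P)).coeff i
      = if i + (M + 1) < n then ((M + 1 - j).factorial : K) *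
        ((((i + (M + 1 - j)).choose (M + 1 - j) : ℕ) : K) * (dcoeff^[j] a) (i + (M + 1 - j))) else 0 := by
    intro i
    have e1 : Polynomial.derivative^[M] (Polynomial.derivative P)
        = Polynomial.derivative^[M + 1] P := (Function.iterate_succ_apply _ _ _).symm
    rw [e1, Polynomial.coeff_iterate_derivative, hPc, nsmul_eq_mul]
    split_ifs with hi
    · rw [VdCProof.dcoeff_iter]
      have e2 : i + (M + 1 - j) + j = i + (M + 1) := by omega
      have e3 : i + (M + 1) - j = i + (M + 1 - j) := by omega
      have e4 := Nat.descFactorial_mul_descFactorial (n := i + (M + 1)) hjm.le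
      rw [e3, Nat.descFactorial_eq_factorial_mul_choose] at e4
      rw [e2, ← e4]
      push_cast
      ring
    · simp
  have hnM : M + 1 < n := lt_of_lt_of_le (by omega) (le_max_right _ _)
  obtain ⟨g1, g2, g3⟩ := hreg
  have hgd : ‖(dcoeff^[j] a) (M + 1 - j)‖ = 1 := by
    have := VdCProof.norm_add_of_lt (x := (1 : K)) (y := (dcoeff^[j] a) (M + 1 - j) - 1)
      (by rw [norm_one]; exact g2)
    rwa [add_sub_cancel, norm_one] at this
  have hδ0 : 0 < δ := norm_pos_iff.2 (by exact_mod_cast Nat.factorial_ne_zero _)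
  have hQ0 : ‖(Polynomial.derivative^[M] (Polynomial.derivative P)).coeff 0‖ = δ := by
    rw [hQc, if_pos (by omega), zero_add, Nat.choose_self, norm_mul, norm_mul, hgd]
    simp [hδd]
  have hQ : ∀ i, 0 < i →
      ‖(Polynomial.derivative^[M] (Polynomial.derivative P)).coeff i‖ < δ := by
    intro i hi
    rw [hQc]
    split_ifs with h
    · rw [norm_mul, norm_mul]
      have h1 := g3 (i + (M + 1 - j)) (by omega)
      have h2 := IsUltrametricDist.norm_natCast_le_one K ((i + (M + 1 - j)).choose (M + 1 - j))
      have h3 := mul_lt_one_of_nonneg_of_lt_one_right h2 (norm_nonneg _) h1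
      exact mul_lt_of_lt_one_right hδ0 h3
    · rw [norm_zero]; exact hδ0
  have hδq : (q : ℝ)⁻¹ ^ (e * (M + 1) ^ 2) ≤ δ := by
    refine hnat _ _ (Nat.factorial_ne_zero _) ?_
    calc (M + 1 - j).factorial ≤ (M + 1).factorial := Nat.factorial_le (by omega)
      _ ≤ (M + 1) ^ (M + 1) := Nat.factorial_le_pow _
      _ ≤ (2 ^ (M + 1)) ^ (M + 1) := Nat.pow_le_pow_left Nat.lt_two_pow_self.le _
      _ = 2 ^ ((M + 1) ^ 2) := by rw [← pow_mul]; ring_nf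
  set L := e * (M + 1) ^ 2 + e with hL
  have hexp : (-(1 : ℝ) / ((M + 1 : ℕ) : ℝ)) = -(1 / ((M + 1 : ℕ) : ℝ)) := by ring
  have hm0 : (0 : ℝ) < ((M + 1 : ℕ) : ℝ) := by positivity
  have hF : ∀ x : K, ‖x‖ ≤ 1 → ‖ψ (y * P.eval x)‖ ≤ 1 := fun x _ => (hψ.norm_eq _).le
  -- reformulate `‖y‖ ^ (-1/m)`
  have hroot : ∀ A : ℝ, 0 < A → ‖y‖ ≤ A ^ (M + 1) → A⁻¹ ≤ ‖y‖ ^ (-(1 : ℝ) / ((M + 1 : ℕ) : ℝ)) := by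
    intro A hA hyA
    rw [hexp, Real.rpow_neg hy0.le]
    apply inv_anti₀ (by positivity)
    calc ‖y‖ ^ (1 / ((M + 1 : ℕ) : ℝ)) ≤ (A ^ (M + 1)) ^ (1 / ((M + 1 : ℕ) : ℝ)) := by gcongr
      _ = A := by rw [one_div]; exact Real.pow_rpow_inv_natCast hA.le (by omega)
  rcases le_or_gt 1 (‖y‖ * (q : ℝ)⁻¹ ^ L) with hbig | hsmall
  · obtain ⟨r, hr1, hr2⟩ := exists_nat_pow_near hbig
      (one_lt_pow₀ hq1 (by omega : M + 1 ≠ 0))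
    have hpb := VdCProof.poly_bound hR hψ hnat P y hy M δ hδ0 hQ0 hQ B hB N hN r (by
      calc (q : ℝ) ^ (r * (M + 1)) = ((q : ℝ) ^ (M + 1)) ^ r := by rw [← pow_mul, mul_comm]
        _ ≤ ‖y‖ * (q : ℝ)⁻¹ ^ L := hr1
        _ = ‖y‖ * ((q : ℝ)⁻¹ ^ (e * (M + 1) ^ 2) * (q : ℝ)⁻¹ ^ e) := by rw [hL, pow_add]
        _ ≤ _ := by gcongr)
    refine hpb.trans ?_
    have h1 := hroot ((q : ℝ) ^ (r + 1 + L)) (by positivity) (by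
      have h2 : ‖y‖ < ((q : ℝ) ^ (M + 1)) ^ (r + 1) * (q : ℝ) ^ L := by
        rw [inv_pow, ← div_eq_mul_inv, div_lt_iff₀ (by positivity)] at hr2
        exact hr2
      refine h2.le.trans ?_
      rw [← pow_mul, ← pow_mul, ← pow_add]
      apply pow_le_pow_right₀ hq1.le
      nlinarith [Nat.zero_le (L * M)])
    calc (q : ℝ) ^ M * (q : ℝ) ^ (e * (M + 1)) * (q : ℝ)⁻¹ ^ r
        = (q : ℝ) ^ (M + 1 + e * (M + 1) + L) * ((q : ℝ) ^ (r + 1 + L))⁻¹ := by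
          rw [inv_pow]
          simp only [pow_add, pow_one]
          field_simp
      _ ≤ _ := by gcongr
  · refine (hR.avg_le _ hF N 0 0 (by simp)).trans ?_
    have h1 := hroot ((q : ℝ) ^ L) (by positivity) (by
      have h2 : ‖y‖ < (q : ℝ) ^ L := by
        rw [inv_pow, ← div_eq_mul_inv, div_lt_iff₀ (by positivity), one_mul] at hsmall
        exact hsmall
      refine h2.le.trans ?_
      rw [← pow_mul]
      apply pow_le_pow_right₀ hq1.le
      nlinarith [Nat.zero_le (L * M)])
    calc (1 : ℝ) = (q : ℝ) ^ L * ((q : ℝ) ^ L)⁻¹ := by field_simp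
      _ ≤ (q : ℝ) ^ (M + 1 + e * (M + 1) + L) * ((q : ℝ) ^ L)⁻¹ := by
          gcongr
          · exact hq1.le
          · omega
      _ ≤ _ := by gcongr
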